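/- Let d ≥ 1, M ≥ 0, c₀ > 0, θ_c > 0. Let D : ℝ^{d×d} → ℝ^{d×d} be a linear map such that D(A) is symmetric for every A, D is self-adjoint with respect to the Frobenius inner product, and c₀ |A|² ≤ D(A) : A for every symmetric A; set Ċ := Ḟᵀ F + Fᵀ Ḟ and ξ(F, Ḟ) := D(Ċ) : Ċ. Let W : GL⁺(d) × (0, ∞) → ℝ satisfy: for each θ > 0 the map F ↦ W(F, θ) is differentiable on GL⁺(d) with Fréchet derivative represented by a matrix S(F, θ) (i.e. the derivative applied to G equals S(F, θ) : G); W(QF, θ) = W(F, θ) for all Q ∈ SO(d), F ∈ GL⁺(d), θ > 0; for each F ∈ GL⁺(d) the map θ ↦ S(F, θ) is twice differentiable on (0, ∞) with ‖∂_θ S(F, θ)‖ ≤ M(1 + |F|) / max(θ, 1) and ‖∂_θ² S(F, θ)‖ ≤ M(1 + |F|) / max(θ, 1)² for all θ > 0. Then there is a constant C depending only on M and c₀ such that for all F ∈ GL⁺(d), Ḟ ∈ ℝ^{d×d}, and θ > 0: |θ · (∂_θ S(F, θ)) : Ḟ| ≤ C · |F⁻¹| · (1 + |F|) · (θ_c ‖∂_θ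 S(F, θ_c)‖ + min(|θ − θ_c|, 1)) · ξ(F, Ḟ)^{1/2}. -/

import Mathlib

attribute [local instance] Matrix.frobeniusNormedAddCommGroup Matrix.frobeniusNormedSpace

open Matrix

/-!
Differentiating `W (exp (u A) F) θ = W F θ` at `u = 0` along a skew matrix `A` shows that the
Kirchhoff stress `S Fᵀ` is symmetric (balance of angular momentum), and this passes to `∂_θ S`.
Symmetry of `S Fᵀ` is symmetry of the second Piola–Kirchhoff stress `F⁻¹ S`, so the stress power is
`S : Ḟ = ½ (F⁻¹ S) : Ċ`, and coercivity bounds `|Ċ|` by `√(ξ / c₀)`. The factor `θ ‖∂_θ S‖` is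
controlled by the boundedness and Lipschitz continuity of `θ ↦ θ ∂_θ S(F, θ)`: the former is used
far from `θ_c`, the latter near `θ_c`.
-/

section Kinematics

variable {m n R : Type*} [Fintype m] [CommRing R]

/-- The rate `Ċ = Ḟᵀ F + Fᵀ Ḟ` of the right Cauchy–Green tensor `C = Fᵀ F`, where `G` plays the
role of `Ḟ`. -/
def cauchyGreenRate (F G : Matrix m n R) : Matrix n n R :=
  Gᵀ * F + Fᵀ * G

theorem isSymm_cauchyGreenRate (F G : Matrix m n R) : (cauchyGreenRate F G).IsSymm := by
  simp [IsSymm, cauchyGreenRate, add_comm]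

theorem trace_mul_cauchyGreenRate [Fintype n] {P : Matrix n n R} (hP : P.IsSymm)
    (F G : Matrix m n R) :
    trace (P * cauchyGreenRate F G) = 2 * trace ((F * P)ᵀ * G) := by
  have htranspose : trace (P * (Gᵀ * F)) = trace (P * (Fᵀ * G)) := by
    rw [← trace_transpose, transpose_mul, transpose_mul, transpose_transpose, hP.eq,
      trace_mul_comm]
  rw [cauchyGreenRate, Matrix.mul_add, trace_add, htranspose, transpose_mul, hP.eq,
    Matrix.mul_assoc, two_mul]

variable [DecidableEq m]

theorem isSymm_inv_mul_of_isSymm_mul_transpose {S F : Matrix m m R} (hF : IsUnit F.det)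
    (h : (S * Fᵀ).IsSymm) : (F⁻¹ * S).IsSymm := by
  have hcongr : F⁻¹ * S = F⁻¹ * (S * Fᵀ) * F⁻¹ᵀ := by
    rw [← Matrix.mul_assoc, Matrix.mul_assoc _ Fᵀ, ← transpose_mul, nonsing_inv_mul _ hF,
      transpose_one, Matrix.mul_one]
  rw [hcongr, IsSymm, transpose_mul, transpose_mul, h.eq, transpose_transpose,
    ← Matrix.mul_assoc F⁻¹]

theorem two_mul_trace_transpose_mul_eq {S F : Matrix m m R} (hF : IsUnit F.det)
    (h : (S * Fᵀ).IsSymm) (G : Matrix m m R) :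
    2 * trace (Sᵀ * G) = trace ((F⁻¹ * S)ᵀ * cauchyGreenRate F G) := by
  have hsymm := isSymm_inv_mul_of_isSymm_mul_transpose hF h
  rw [hsymm.eq, trace_mul_cauchyGreenRate hsymm, mul_nonsing_inv_cancel_left _ _ hF]

end Kinematics

section FrobeniusNorm

variable {m n 𝕜 : Type*}

theorem frobenius_norm_eq_norm_vec [Fintype m] [Fintype n] {E : Type*}
    [NormedAddCommGroup E] (A : Matrix m n E) :
    ‖A‖ = ‖WithLp.toLp 2 (vec A)‖ := by
  rw [frobenius_norm_def, PiLp.norm_eq_of_L2, Real.sqrt_eq_rpow, Finset.sum_comm,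
    Fintype.sum_prod_type]
  simp [vec]

theorem norm_trace_conjTranspose_mul_le [Fintype m] [Fintype n] [RCLike 𝕜] (A B : Matrix m n 𝕜) :
    ‖trace (Aᴴ * B)‖ ≤ ‖A‖ * ‖B‖ := by
  have hinner : trace (Aᴴ * B) = inner 𝕜 (WithLp.toLp 2 (vec A)) (WithLp.toLp 2 (vec B)) := by
    rw [← star_vec_dotProduct_vec, EuclideanSpace.inner_toLp_toLp, dotProduct_comm]
  rw [hinner, frobenius_norm_eq_norm_vec, frobenius_norm_eq_norm_vec]
  exact norm_inner_le_norm _ _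

theorem isSymm_of_hasDerivAt [Finite n] [NontriviallyNormedField 𝕜] {E : Type*}
    [NormedAddCommGroup E] [NormedSpace 𝕜 E] {f : 𝕜 → Matrix n n E} {f' : Matrix n n E} {t : 𝕜}
    (hf : HasDerivAt f f' t) (hsymm : ∀ᶠ s in nhds t, (f s).IsSymm) : f'.IsSymm := by
  have := Fintype.ofFinite n
  let T : Matrix n n E →L[𝕜] Matrix n n E :=
    ⟨(transposeLinearEquiv n n 𝕜 E).toLinearMap, continuous_id.matrix_transpose⟩
  have hfT : HasDerivAt (fun s => (f s)ᵀ) f'ᵀ t := T.hasFDerivAt.comp_hasDerivAt t hf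
  exact hfT.unique (hf.congr_of_eventuallyEq (hsymm.mono fun _ hs => hs))

end FrobeniusNorm

section FrameIndifference

variable {n : Type*} [Fintype n]

theorem isHermitian_of_forall_trace_eq_zero {R : Type*} [CommRing R] [PartialOrder R] [StarRing R]
    [StarOrderedRing R] [NoZeroDivisors R] {B : Matrix n n R}
    (h : ∀ A ∈ skewAdjoint (Matrix n n R), trace (Bᴴ * A) = 0) : B.IsHermitian := by
  have hskew : (B - Bᴴ)ᴴ = -(B - Bᴴ) := by simp
  have h₁ : trace (Bᴴ * (B - Bᴴ)) = 0 := h _ hskew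
  have h₂ : trace (B * (B - Bᴴ)) = 0 := by
    rw [← star_eq_zero, ← trace_conjTranspose, conjTranspose_mul, hskew, Matrix.neg_mul, trace_neg,
      trace_mul_comm, h₁, neg_zero]
  have hzero : B - Bᴴ = 0 := by
    rw [← trace_conjTranspose_mul_self_eq_zero_iff, conjTranspose_sub, conjTranspose_conjTranspose,
      Matrix.sub_mul, trace_sub, h₁, h₂, sub_zero]
  exact (sub_eq_zero.1 hzero).symm

attribute [local instance] Matrix.frobeniusNormedRing Matrix.frobeniusNormedAlgebra

variable [DecidableEq n]

theorem exp_mem_specialOrthogonalGroup_of_mem_skewAdjoint {A : Matrix n n ℝ}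
    (hA : A ∈ skewAdjoint (Matrix n n ℝ)) : NormedSpace.exp A ∈ specialOrthogonalGroup n ℝ := by
  refine mem_specialOrthogonalGroup_iff.2
    ⟨NormedSpace.exp_mem_unitary_of_mem_skewAdjoint hA, ?_⟩
  -- `exp A` is the square of the orthogonal matrix `exp (A / 2)`, whose determinant is `±1`.
  have hhalf : NormedSpace.exp ((1 / 2 : ℝ) • A) ∈ orthogonalGroup n ℝ :=
    NormedSpace.exp_mem_unitary_of_mem_skewAdjoint (skewAdjoint.smul_mem _ hA)
  have hdet := (det_of_mem_unitary hhalf).1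
  have hdouble : A = 2 • ((1 / 2 : ℝ) • A) := by
    rw [two_nsmul, ← add_smul, add_halves, one_smul]
  rwa [hdouble, exp_nsmul, det_pow, sq]

theorem fderiv_apply_skewAdjoint_mul_eq_zero {E : Type*} [NormedAddCommGroup E] [NormedSpace ℝ E]
    {w : Matrix n n ℝ → E} {L : Matrix n n ℝ →L[ℝ] E} {F A : Matrix n n ℝ}
    (hL : HasFDerivAt w L F) (hw : ∀ Q ∈ specialOrthogonalGroup n ℝ, w (Q * F) = w F)
    (hA : A ∈ skewAdjoint (Matrix n n ℝ)) : L (A * F) = 0 := by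
  have hexp : HasDerivAt (fun u : ℝ => NormedSpace.exp (u • A) * F) (A * F) 0 := by
    have h := (hasDerivAt_exp_smul_const (𝕂 := ℝ) A 0).mul_const F
    rw [zero_smul, NormedSpace.exp_zero, one_mul] at h
    exact h
  have hcomp : HasDerivAt (fun u : ℝ => w (NormedSpace.exp (u • A) * F)) (L (A * F)) 0 :=
    HasFDerivAt.comp_hasDerivAt_of_eq (0 : ℝ) hL hexp (by simp)
  have hconst (u : ℝ) : w (NormedSpace.exp (u • A) * F) = w F :=
    hw _ (exp_mem_specialOrthogonalGroup_of_mem_skewAdjoint (skewAdjoint.smul_mem u hA))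
  simp only [hconst] at hcomp
  exact hcomp.unique (hasDerivAt_const _ _)

/-- `S` represents the Fréchet derivative of `w` at `F` through the Frobenius inner product
`S : G = tr (Sᵀ G)`; for a stored energy `w` this is the first Piola–Kirchhoff stress. -/
def HasFrobeniusGradientAt (w : Matrix n n ℝ → ℝ) (S F : Matrix n n ℝ) : Prop :=
  ∃ L : Matrix n n ℝ →L[ℝ] ℝ, HasFDerivAt w L F ∧ ∀ G, L G = trace (Sᵀ * G)

theorem HasFrobeniusGradientAt.isSymm_mul_transpose {w : Matrix n n ℝ → ℝ} {S F : Matrix n n ℝ}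
    (hS : HasFrobeniusGradientAt w S F)
    (hw : ∀ Q ∈ specialOrthogonalGroup n ℝ, w (Q * F) = w F) : (S * Fᵀ).IsSymm := by
  obtain ⟨L, hL, hLS⟩ := hS
  refine isHermitian_iff_isSymm.1 (isHermitian_of_forall_trace_eq_zero fun A hA => ?_)
  rw [← fderiv_apply_skewAdjoint_mul_eq_zero hL hw hA, hLS,
    conjTranspose_eq_transpose_of_trivial, transpose_mul, transpose_transpose, Matrix.mul_assoc,
    trace_mul_comm, Matrix.mul_assoc]

theorem isSymm_gradient_deriv_mul_transpose {W : Matrix n n ℝ → ℝ → ℝ} {S : ℝ → Matrix n n ℝ}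
    {S' F : Matrix n n ℝ} {θ : ℝ}
    (hW : ∀ᶠ t in nhds θ, ∀ Q ∈ specialOrthogonalGroup n ℝ, W (Q * F) t = W F t)
    (hS : ∀ᶠ t in nhds θ, HasFrobeniusGradientAt (W · t) (S t) F)
    (hS' : HasDerivAt S S' θ) : (S' * Fᵀ).IsSymm :=
  isSymm_of_hasDerivAt (hS'.mul_const Fᵀ) <| by
    filter_upwards [hW, hS] with t hWt hSt using hSt.isSymm_mul_transpose hWt

end FrameIndifference

section Dissipation

variable {n : Type*} [Fintype n]

/-- The dissipation rate `ξ(F, Ḟ) = D(Ċ) : Ċ`, where `G` plays the role of `Ḟ`. -/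
def dissipationRate (D : Matrix n n ℝ → Matrix n n ℝ) (F G : Matrix n n ℝ) : ℝ :=
  trace ((D (cauchyGreenRate F G))ᵀ * cauchyGreenRate F G)

theorem norm_cauchyGreenRate_le {c₀ : ℝ} (hc₀ : 0 < c₀) {D : Matrix n n ℝ → Matrix n n ℝ}
    (hD : ∀ A : Matrix n n ℝ, A.IsSymm → c₀ * ‖A‖ ^ 2 ≤ trace ((D A)ᵀ * A))
    (F G : Matrix n n ℝ) :
    ‖cauchyGreenRate F G‖ ≤ √(dissipationRate D F G) / √c₀ := by
  rw [← Real.sqrt_div' _ hc₀.le]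
  refine Real.le_sqrt_of_sq_le ((le_div_iff₀' hc₀).2 ?_)
  exact hD _ (isSymm_cauchyGreenRate F G)

theorem abs_trace_transpose_mul_le_cauchyGreenRate [DecidableEq n] {S F : Matrix n n ℝ}
    (hF : IsUnit F.det) (h : (S * Fᵀ).IsSymm) (G : Matrix n n ℝ) :
    |trace (Sᵀ * G)| ≤ ‖F⁻¹‖ * ‖S‖ * ‖cauchyGreenRate F G‖ / 2 := by
  rw [le_div_iff₀' two_pos]
  calc 2 * |trace (Sᵀ * G)| = ‖trace ((F⁻¹ * S)ᴴ * cauchyGreenRate F G)‖ := by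
        rw [conjTranspose_eq_transpose_of_trivial, ← two_mul_trace_transpose_mul_eq hF h,
          Real.norm_eq_abs, abs_mul, abs_two]
    _ ≤ ‖F⁻¹ * S‖ * ‖cauchyGreenRate F G‖ := norm_trace_conjTranspose_mul_le _ _
    _ ≤ ‖F⁻¹‖ * ‖S‖ * ‖cauchyGreenRate F G‖ := by
        gcongr
        exact frobenius_norm_mul _ _

theorem abs_trace_transpose_mul_le_sqrt_dissipationRate [DecidableEq n] {c₀ : ℝ} (hc₀ : 0 < c₀)
    {D : Matrix n n ℝ → Matrix n n ℝ}
    (hD : ∀ A : Matrix n n ℝ, A.IsSymm → c₀ * ‖A‖ ^ 2 ≤ trace ((D A)ᵀ * A)) {S F : Matrix n n ℝ}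
    (hF : IsUnit F.det) (h : (S * Fᵀ).IsSymm) (G : Matrix n n ℝ) :
    |trace (Sᵀ * G)| ≤ ‖F⁻¹‖ * ‖S‖ * √(dissipationRate D F G) / (2 * √c₀) :=
  calc |trace (Sᵀ * G)| ≤ ‖F⁻¹‖ * ‖S‖ * ‖cauchyGreenRate F G‖ / 2 :=
        abs_trace_transpose_mul_le_cauchyGreenRate hF h G
    _ ≤ ‖F⁻¹‖ * ‖S‖ * (√(dissipationRate D F G) / √c₀) / 2 := by
        gcongr
        exact norm_cauchyGreenRate_le hc₀ hD F G
    _ = ‖F⁻¹‖ * ‖S‖ * √(dissipationRate D F G) / (2 * √c₀) := by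
        rw [mul_div_assoc', div_div, mul_comm (√c₀)]

end Dissipation

section TemperatureWeight

theorem mul_le_of_le_div_max_one {𝕜 : Type*} [Field 𝕜] [LinearOrder 𝕜] [IsStrictOrderedRing 𝕜]
    {t a K : 𝕜} (ha : 0 ≤ a) (h : a ≤ K / max t 1) : t * a ≤ K :=
  calc t * a ≤ max t 1 * a := mul_le_mul_of_nonneg_right (le_max_left _ _) ha
    _ ≤ K := (le_div_iff₀' (lt_max_of_lt_right one_pos)).1 h

variable {E : Type*} [NormedAddCommGroup E] [NormedSpace ℝ E] {f f' : ℝ → E} {K : ℝ}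

theorem norm_smul_sub_smul_le_of_norm_le_div_max (hf : ∀ t, 0 < t → HasDerivAt f (f' t) t)
    (hb : ∀ t, 0 < t → ‖f t‖ ≤ K / max t 1) (hb' : ∀ t, 0 < t → ‖f' t‖ ≤ K / max t 1 ^ 2)
    {s t : ℝ} (hs : 0 < s) (ht : 0 < t) : ‖t • f t - s • f s‖ ≤ 2 * K * |t - s| := by
  have hderiv (r : ℝ) (hr : 0 < r) : ‖r • f' r + (1 : ℝ) • f r‖ ≤ 2 * K := by
    have hmax : 1 ≤ max r 1 := le_max_right _ _
    have hK : 0 ≤ K := (mul_nonneg hr.le (norm_nonneg _)).trans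
      (mul_le_of_le_div_max_one (norm_nonneg _) (hb r hr))
    have hf'r : ‖f' r‖ ≤ K / max r 1 :=
      (hb' r hr).trans <|
        div_le_div_of_nonneg_left hK (by positivity) (le_self_pow₀ hmax two_ne_zero)
    calc ‖r • f' r + (1 : ℝ) • f r‖ ≤ r * ‖f' r‖ + ‖f r‖ := by
          simpa [norm_smul, abs_of_pos hr] using norm_add_le (r • f' r) ((1 : ℝ) • f r)
      _ ≤ K + K := add_le_add (mul_le_of_le_div_max_one (norm_nonneg _) hf'r)
          ((hb r hr).trans (div_le_self hK hmax))
      _ = 2 * K := (two_mul K).symm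
  exact Convex.norm_image_sub_le_of_norm_hasDerivWithin_le (s := Set.Ioi 0)
    (fun r hr => ((hasDerivAt_id r).smul (hf r hr)).hasDerivWithinAt) hderiv (convex_Ioi 0) hs ht

theorem mul_norm_le_add_min_of_norm_le_div_max (hf : ∀ t, 0 < t → HasDerivAt f (f' t) t)
    (hb : ∀ t, 0 < t → ‖f t‖ ≤ K / max t 1) (hb' : ∀ t, 0 < t → ‖f' t‖ ≤ K / max t 1 ^ 2)
    {s t : ℝ} (hs : 0 < s) (ht : 0 < t) :
    t * ‖f t‖ ≤ s * ‖f s‖ + 2 * K * min |t - s| 1 := by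
  have hbounded : t * ‖f t‖ ≤ K := mul_le_of_le_div_max_one (norm_nonneg _) (hb t ht)
  have hft : 0 ≤ t * ‖f t‖ := by positivity
  have hfs : 0 ≤ s * ‖f s‖ := by positivity
  rcases le_total |t - s| 1 with hnear | hfar
  · rw [min_eq_left hnear, ← sub_le_iff_le_add']
    calc t * ‖f t‖ - s * ‖f s‖ = ‖t • f t‖ - ‖s • f s‖ := by
          rw [norm_smul, norm_smul, Real.norm_of_nonneg ht.le, Real.norm_of_nonneg hs.le]
      _ ≤ ‖t • f t - s • f s‖ := norm_sub_norm_le _ _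
      _ ≤ 2 * K * |t - s| := norm_smul_sub_smul_le_of_norm_le_div_max hf hb hb' hs ht
  · rw [min_eq_right hfar]
    linarith

end TemperatureWeight

theorem adiabatic_term_dissipation_bound_general {n : Type*} [Fintype n] [DecidableEq n]
    {M c₀ θc : ℝ} (hc₀ : 0 < c₀) (hθc : 0 < θc) {D : Matrix n n ℝ → Matrix n n ℝ}
    (hD : ∀ A : Matrix n n ℝ, A.IsSymm → c₀ * ‖A‖ ^ 2 ≤ trace ((D A)ᵀ * A))
    {W : Matrix n n ℝ → ℝ → ℝ} {S Sθ Sθθ : ℝ → Matrix n n ℝ} {F : Matrix n n ℝ}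
    (hF : IsUnit F.det)
    (hW : ∀ Q ∈ specialOrthogonalGroup n ℝ, ∀ θ, 0 < θ → W (Q * F) θ = W F θ)
    (hS : ∀ θ, 0 < θ → HasFrobeniusGradientAt (W · θ) (S θ) F)
    (hSθ : ∀ θ, 0 < θ → HasDerivAt S (Sθ θ) θ)
    (hSθθ : ∀ θ, 0 < θ → HasDerivAt Sθ (Sθθ θ) θ)
    (hb : ∀ θ, 0 < θ → ‖Sθ θ‖ ≤ M * (1 + ‖F‖) / max θ 1)
    (hb' : ∀ θ, 0 < θ → ‖Sθθ θ‖ ≤ M * (1 + ‖F‖) / max θ 1 ^ 2)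
    (G : Matrix n n ℝ) {θ : ℝ} (hθ : 0 < θ) :
    |θ * trace ((Sθ θ)ᵀ * G)| ≤
      (1 + 2 * M) / (2 * √c₀) * ‖F⁻¹‖ * (1 + ‖F‖) * (θc * ‖Sθ θc‖ + min |θ - θc| 1) *
        √(dissipationRate D F G) := by
  have hsymm : (Sθ θ * Fᵀ).IsSymm := by
    refine isSymm_gradient_deriv_mul_transpose (W := W) ?_ ?_ (hSθ θ hθ)
    · filter_upwards [lt_mem_nhds hθ] with t ht Q hQ using hW Q hQ t ht
    · filter_upwards [lt_mem_nhds hθ] with t ht using hS t ht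
  have hweight : θ * ‖Sθ θ‖ ≤ (1 + 2 * M) * (1 + ‖F‖) * (θc * ‖Sθ θc‖ + min |θ - θc| 1) := by
    have hMF : 0 ≤ M * (1 + ‖F‖) := by simpa using (norm_nonneg _).trans (hb 1 one_pos)
    have hθc_nonneg : 0 ≤ θc * ‖Sθ θc‖ := by positivity
    have hmin : 0 ≤ min |θ - θc| 1 := by positivity
    have hfactor : (1 + 2 * M) * (1 + ‖F‖) = 1 + ‖F‖ + 2 * (M * (1 + ‖F‖)) := by ring
    refine (mul_norm_le_add_min_of_norm_le_div_max hSθθ hb hb' hθc hθ).trans ?_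
    rw [hfactor, mul_add _ (θc * _)]
    exact add_le_add (le_mul_of_one_le_left hθc_nonneg (by linarith [norm_nonneg F]))
      (mul_le_mul_of_nonneg_right (by linarith [norm_nonneg F]) hmin)
  calc |θ * trace ((Sθ θ)ᵀ * G)| = θ * |trace ((Sθ θ)ᵀ * G)| := by rw [abs_mul, abs_of_pos hθ]
    _ ≤ θ * (‖F⁻¹‖ * ‖Sθ θ‖ * √(dissipationRate D F G) / (2 * √c₀)) := by
        gcongr
        exact abs_trace_transpose_mul_le_sqrt_dissipationRate hc₀ hD hF hsymm G
    _ = ‖F⁻¹‖ * (θ * ‖Sθ θ‖) * √(dissipationRate D F G) / (2 * √c₀) := by ring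
    _ ≤ ‖F⁻¹‖ * ((1 + 2 * M) * (1 + ‖F‖) * (θc * ‖Sθ θc‖ + min |θ - θc| 1)) *
          √(dissipationRate D F G) / (2 * √c₀) := by gcongr
    _ = _ := by ring

/-- Adiabatic heat-source bound: there is a constant `C > 0` depending only on
`M` and `c₀` such that for any dimension `d ≥ 1`, any critical temperature
`θ_c > 0`, any symmetric-valued, self-adjoint, coercive dissipation tensor `D`,
and any frame-indifferent potential `W` with Fréchet derivative represented by
`S(F,θ)` (Frobenius inner product) whose `θ`-derivatives satisfy
`‖∂_θ S(F,θ)‖ ≤ M(1+|F|)/max(θ,1)` and `‖∂_θ² S(F,θ)‖ ≤ M(1+|F|)/max(θ,1)²`,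
one has, for all `F ∈ GL⁺(d)`, `Ḟ`, `θ > 0`,
`|θ (∂_θ S(F,θ)) : Ḟ| ≤ C |F⁻¹| (1+|F|) (θ_c ‖∂_θ S(F,θ_c)‖ + min(|θ−θ_c|,1)) ξ(F,Ḟ)^{1/2}`. -/
theorem adiabatic_term_dissipation_bound (M c₀ : ℝ) (hM : 0 ≤ M) (hc₀ : 0 < c₀) :
    ∃ C : ℝ, 0 < C ∧
      ∀ (d : ℕ), 1 ≤ d →
      ∀ (θc : ℝ), 0 < θc →
      ∀ (D : Matrix (Fin d) (Fin d) ℝ →ₗ[ℝ] Matrix (Fin d) (Fin d) ℝ),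
        (∀ A : Matrix (Fin d) (Fin d) ℝ, (D A)ᵀ = D A) →
        (∀ A B : Matrix (Fin d) (Fin d) ℝ,
          Matrix.trace ((D A)ᵀ * B) = Matrix.trace (Aᵀ * D B)) →
        (∀ A : Matrix (Fin d) (Fin d) ℝ, Aᵀ = A →
          c₀ * ‖A‖ ^ 2 ≤ Matrix.trace ((D A)ᵀ * A)) →
      ∀ (W : Matrix (Fin d) (Fin d) ℝ → ℝ → ℝ)
        (S Sθ Sθθ : Matrix (Fin d) (Fin d) ℝ → ℝ → Matrix (Fin d) (Fin d) ℝ),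
        (∀ (Q F : Matrix (Fin d) (Fin d) ℝ) (θ : ℝ),
          Qᵀ * Q = 1 → Q.det = 1 → 0 < F.det → 0 < θ → W (Q * F) θ = W F θ) →
        (∀ (F : Matrix (Fin d) (Fin d) ℝ) (θ : ℝ), 0 < F.det → 0 < θ →
          ∃ L : Matrix (Fin d) (Fin d) ℝ →L[ℝ] ℝ,
            HasFDerivAt (fun X => W X θ) L F ∧
            ∀ G : Matrix (Fin d) (Fin d) ℝ, L G = Matrix.trace ((S F θ)ᵀ * G)) →
        (∀ (F : Matrix (Fin d) (Fin d) ℝ) (θ : ℝ), 0 < F.det → 0 < θ →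
          HasDerivAt (fun t => S F t) (Sθ F θ) θ) →
        (∀ (F : Matrix (Fin d) (Fin d) ℝ) (θ : ℝ), 0 < F.det → 0 < θ →
          HasDerivAt (fun t => Sθ F t) (Sθθ F θ) θ) →
        (∀ (F : Matrix (Fin d) (Fin d) ℝ) (θ : ℝ), 0 < F.det → 0 < θ →
          ‖Sθ F θ‖ ≤ M * (1 + ‖F‖) / max θ 1) →
        (∀ (F : Matrix (Fin d) (Fin d) ℝ) (θ : ℝ), 0 < F.det → 0 < θ →
          ‖Sθθ F θ‖ ≤ M * (1 + ‖F‖) / (max θ 1) ^ 2) →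
      ∀ (F Fdot : Matrix (Fin d) (Fin d) ℝ) (θ : ℝ), 0 < F.det → 0 < θ →
        |θ * Matrix.trace ((Sθ F θ)ᵀ * Fdot)| ≤
          C * ‖F⁻¹‖ * (1 + ‖F‖) * (θc * ‖Sθ F θc‖ + min |θ - θc| 1) *
            Real.sqrt
              (Matrix.trace
                ((D (Fdotᵀ * F + Fᵀ * Fdot))ᵀ * (Fdotᵀ * F + Fᵀ * Fdot))) := by
  refine ⟨(1 + 2 * M) / (2 * √c₀), by positivity, ?_⟩
  intro d _ θc hθc D _ _ hD W S Sθ Sθθ hW hS hSθ hSθθ hb hb' F Fdot θ hF hθ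
  exact adiabatic_term_dissipation_bound_general hc₀ hθc hD hF.ne'.isUnit
    (fun Q hQ t => hW Q F t ((mem_orthogonalGroup_iff' _ _).1 hQ.1) hQ.2 hF) (hS F · hF)
    (hSθ F · hF) (hSθθ F · hF) (hb F · hF) (hb' F · hF) Fdot hθ
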